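/- Let ρ = exp(−H₀) and σ = ρ_X = exp(−(H₀+X)) be finite faithful weights on a separable Hilbert space H with X bounded and σ nearby ρ. Then both relative entropies S(ρ|σ) = Tr ρ(log ρ − log σ) and S(σ|ρ) = Tr σ(log σ − log ρ) are finite, and their sum satisfies the identity S(ρ|σ) + S(σ|ρ) = Tr{(ρ − σ)X}. -/

import Mathlib

open scoped InnerProductSpace ENNReal NNReal
open MeasureTheory Metric Filter

noncomputable section

variable {H : Type*} [NormedAddCommGroup H] [InnerProductSpace ℂ H] [CompleteSpace H]
  [TopologicalSpace.SeparableSpace H]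

/-- The real power `ρ ^ t` (for `t ≥ 0`) of a positive operator `ρ`, via the continuous
functional calculus. -/
def opow (ρ : H →L[ℂ] H) (t : ℝ) : H →L[ℂ] H := cfc (fun x : ℝ => x ^ t) ρ

/-- The (real) trace of an operator, computed along the Hilbert basis `b`. -/
def trElem {ι : Type*} (b : HilbertBasis ι ℂ H) (T : H →L[ℂ] H) : ℝ :=
  ∑' i, (⟪b i, T (b i)⟫_ℂ).re

/-- `ρ` is a finite faithful weight: a positive, injective, trace-class operator
(trace-class being witnessed by summability of the diagonal in the Hilbert basis `b`). -/
def IsFiniteWeight {ι : Type*} (b : HilbertBasis ι ℂ H) (ρ : H →L[ℂ] H) : Prop :=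
  0 ≤ ρ ∧ Function.Injective (⇑ρ) ∧ Summable (fun i => (⟪b i, ρ (b i)⟫_ℂ).re)

/-- `σ` is nearby `ρ`: there is `C > 1` with `C⁻¹ ρ ≤ σ ≤ C ρ` in the Loewner order. -/
def IsNearby (σ ρ : H →L[ℂ] H) : Prop :=
  ∃ C : ℝ, 1 < C ∧ C⁻¹ • ρ ≤ σ ∧ σ ≤ C • ρ

/-- `F` is the Araki family `t ↦ ρ^t X ρ^{-t}` of `X` relative to `ρ`: a bounded holomorphic
`B(H)`-valued extension to the disc `|t| < 1/2` of `t ↦ ρ^t X ρ^{-t}`, the latter being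
expressed by `F t * ρ^t = ρ^t * X` and `ρ^t * F (-t) = X * ρ^t` for real `0 ≤ t < 1/2`. -/
def IsArakiFamily (ρ X : H →L[ℂ] H) (F : ℂ → H →L[ℂ] H) : Prop :=
  DifferentiableOn ℂ F (ball (0:ℂ) (1/2)) ∧
  (∃ M : ℝ, ∀ t ∈ ball (0:ℂ) (1/2), ‖F t‖ ≤ M) ∧
  (∀ t : ℝ, 0 ≤ t → t < 1/2 → F (t:ℂ) * opow ρ t = opow ρ t * X) ∧
  (∀ t : ℝ, 0 ≤ t → t < 1/2 → opow ρ t * F (-(t:ℂ)) = X * opow ρ t)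

/-- `X` satisfies the Araki condition for `ρ`. -/
def SatisfiesAraki (ρ X : H →L[ℂ] H) : Prop := ∃ F, IsArakiFamily ρ X F

/-- The Araki norm `‖X‖_A = sup_{|t| < 1/2} ‖ρ^t X ρ^{-t}‖`. -/
def arakiNorm (ρ X : H →L[ℂ] H) : ℝ :=
  sInf {M : ℝ | 0 ≤ M ∧ ∃ F, IsArakiFamily ρ X F ∧ ∀ t ∈ ball (0:ℂ) (1/2), ‖F t‖ ≤ M}

/-- `σ = exp (-(H₀ + X))` where `ρ = exp (-H₀)`: the semigroup `t ↦ σ^t` is the mild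
(Duhamel) solution of the semigroup `t ↦ ρ^t` perturbed by the bounded operator `-X`,
i.e. `σ^t = ρ^t - ∫_0^t ρ^{t-s} X σ^s ds` for all `t ≥ 0`. -/
def IsExpPerturbed (ρ σ X : H →L[ℂ] H) : Prop :=
  ∀ t : ℝ, 0 ≤ t →
    opow σ t = opow ρ t - ∫ s in (0:ℝ)..t, opow ρ (t - s) * X * opow σ s

/-- The truncation `x ↦ -log (x + e^{-n})` of `-log`; it increases pointwise to `-log x`
as `n → ∞` and is operator anti-monotone. -/
def negLogTrunc (n : ℕ) (x : ℝ) : ℝ := - Real.log (x + Real.exp (-(n:ℝ)))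

/-- The regularised quadratic form `⟪ξ, (-log (ρ + e^{-n})) ξ⟫` of `H₀ = -log ρ`. -/
def negLogFormSeq (ρ : H →L[ℂ] H) (ξ : H) (n : ℕ) : ℝ :=
  (⟪ξ, (cfc (negLogTrunc n) ρ) ξ⟫_ℂ).re

/-- `ξ` lies in the form domain `Q(H₀) = Dom (H₀^{1/2})` of `H₀ = -log ρ`. -/
def InFormDomain (ρ : H →L[ℂ] H) (ξ : H) : Prop :=
  BddAbove (Set.range (negLogFormSeq ρ ξ))

/-- The value `⟪ξ, H₀ ξ⟫` of the quadratic form of `H₀ = -log ρ` (a monotone limit). -/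
def negLogForm (ρ : H →L[ℂ] H) (ξ : H) : ℝ := ⨆ n, negLogFormSeq ρ ξ n

/-- The regularised quadratic form `⟪ξ, (σ + e^{-n})⁻¹ ξ⟫` of `σ⁻¹`. -/
def invFormSeq (σ : H →L[ℂ] H) (ξ : H) (n : ℕ) : ℝ :=
  (⟪ξ, (cfc (fun x : ℝ => (x + Real.exp (-(n:ℝ)))⁻¹) σ) ξ⟫_ℂ).re

/-- The quadratic form `⟪ξ, σ⁻¹ ξ⟫ ∈ [0, ∞]` of the (possibly unbounded) inverse `σ⁻¹`
of the injective positive operator `σ`, as a monotone limit of regularisations. -/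
def invForm (σ : H →L[ℂ] H) (ξ : H) : ℝ≥0∞ :=
  ⨆ n : ℕ, ENNReal.ofReal (invFormSeq σ ξ n)

/-- `S` is the relative entropy `S(ρ|σ) = Tr (ρ (log ρ - log σ))`, obtained as the limit of
the regularised quantities `Tr (ρ (log (ρ + e^{-n}) - log (σ + e^{-n})))`. -/
def IsRelativeEntropy {ι : Type*} (b : HilbertBasis ι ℂ H) (ρ σ : H →L[ℂ] H) (S : ℝ) : Prop :=
  Tendsto (fun n : ℕ => trElem b (ρ * (cfc (negLogTrunc n) σ - cfc (negLogTrunc n) ρ)))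
    atTop (nhds S)

/-- The `n`-th term of the Matsubara (Dyson/expansional) series: the integral over the
ordered simplex `0 ≤ s₁ ≤ ⋯ ≤ sₙ ≤ 1` (of volume `1/n!`) of the product
`F(s₁ - 1/2) ⋯ F(sₙ - 1/2)`, where `F t = ρ^t X ρ^{-t}`. -/
def matsubaraTerm (F : ℂ → H →L[ℂ] H) (n : ℕ) : H →L[ℂ] H :=
  ∫ s in {s : Fin n → ℝ | (∀ i, s i ∈ Set.Icc (0:ℝ) 1) ∧ Monotone s},
    (List.ofFn fun i => F (((s i - 1/2 : ℝ) : ℂ))).prod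

set_option linter.unusedSectionVars false

lemma aux_exp_bound (u : ℝ) : |Real.exp u - 1 - u| ≤ u ^ 2 * max 1 (Real.exp u) := by
  have h1 := Real.add_one_le_exp u
  have h2 := Real.add_one_le_exp (-u)
  have h3 : Real.exp u * Real.exp (-u) = 1 := by rw [← Real.exp_add]; simp
  have h4 : Real.exp u - 1 ≤ u * Real.exp u := by nlinarith [Real.exp_pos u]
  rw [abs_of_nonneg (by linarith)]
  rcases le_total 0 u with hu | hu
  · have : u * (Real.exp u - 1) ≤ u * (u * Real.exp u) := by gcongr
    have : u ^ 2 * Real.exp u ≤ u ^ 2 * max 1 (Real.exp u) := by gcongr; exact le_max_right _ _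
    nlinarith
  · have : u ^ 2 * 1 ≤ u ^ 2 * max 1 (Real.exp u) := by gcongr; exact le_max_left _ _
    nlinarith

lemma aux_deriv_bound (x t : ℝ) (hx : 0 ≤ x) (ht : 0 < t) (ht1 : t ≤ 1) :
    |t⁻¹ * (x ^ (1 + t) - x) - x * Real.log x| ≤
      t * (4 * (√x * Real.log √x) ^ 2 * max 1 x) := by
  rcases hx.eq_or_lt with rfl | hx
  · have : (0:ℝ) ^ (1 + t) = 0 := Real.zero_rpow (by linarith)
    simp [this]
  have e1 : x ^ (1 + t) = x * Real.exp (t * Real.log x) := by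
    rw [Real.rpow_add hx, Real.rpow_one, Real.rpow_def_of_pos hx, mul_comm t]
  have e2 : t⁻¹ * (x ^ (1 + t) - x) - x * Real.log x
      = t⁻¹ * x * (Real.exp (t * Real.log x) - 1 - t * Real.log x) := by
    rw [e1]; field_simp
  have e3 : 4 * (√x * Real.log √x) ^ 2 = x * Real.log x ^ 2 := by
    rw [Real.log_sqrt hx.le, mul_pow, Real.sq_sqrt hx.le]; ring
  have e4 : Real.exp (t * Real.log x) ≤ max 1 x := by
    rw [mul_comm, ← Real.rpow_def_of_pos hx]
    rcases le_total x 1 with h | h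
    · exact (Real.rpow_le_one hx.le h ht.le).trans (le_max_left _ _)
    · exact (Real.rpow_le_rpow_of_exponent_le h ht1).trans (by simp)
  rw [e2, e3, abs_mul, abs_of_pos (by positivity : 0 < t⁻¹ * x)]
  calc _ ≤ t⁻¹ * x * ((t * Real.log x) ^ 2 * max 1 (Real.exp (t * Real.log x))) := by
        gcongr; exact aux_exp_bound _
    _ ≤ t⁻¹ * x * ((t * Real.log x) ^ 2 * max 1 x) := by
        gcongr ?_ * ((?_) * ?_)
        exact max_le (le_max_left _ _) e4
    _ = _ := by field_simp

lemma aux_log_bound (x ε : ℝ) (hx : 0 ≤ x) (hε : 0 < ε) :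
    |x * Real.log x - x * Real.log (x + ε)| ≤ ε := by
  rcases hx.eq_or_lt with rfl | hx
  · simp [hε.le]
  have h1 : Real.log x ≤ Real.log (x + ε) := Real.log_le_log hx (by linarith)
  have h2 : Real.log (x + ε) - Real.log x ≤ ε / x := by
    rw [← Real.log_div (by positivity) hx.ne']
    have := Real.log_le_sub_one_of_pos (x := (x + ε) / x) (by positivity)
    have e : (x + ε) / x - 1 = ε / x := by field_simp; ring
    linarith
  have h3 : x * (Real.log (x + ε) - Real.log x) ≤ ε := by
    calc _ ≤ x * (ε / x) := by gcongr
      _ = ε := by field_simp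
  rw [abs_sub_comm, ← mul_sub, abs_of_nonneg (mul_nonneg hx.le (by linarith))]
  exact h3

lemma aux_spec (ρ : H →L[ℂ] H) (hρ : 0 ≤ ρ) : ∀ x ∈ spectrum ℝ ρ, 0 ≤ x :=
  fun _ hx => spectrum_nonneg_of_nonneg hρ hx

/-- Norm derivative of `t ↦ ρ^(1+t)` at `0+`. -/
lemma opow_deriv (ρ : H →L[ℂ] H) (hρ : 0 ≤ ρ) :
    Tendsto (fun t : ℝ => t⁻¹ • (opow ρ (1 + t) - ρ)) (nhdsWithin 0 (Set.Ioi 0))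
      (nhds (cfc (fun x : ℝ => x * Real.log x) ρ)) := by
  have hsa : IsSelfAdjoint ρ := IsSelfAdjoint.of_nonneg hρ
  have hc : ∀ t : ℝ, 0 < t → Continuous fun x : ℝ => x ^ (1 + t) := fun t ht =>
    Real.continuous_rpow_const (by linarith)
  have key : Tendsto (fun t : ℝ => cfc (fun x : ℝ => t⁻¹ * (x ^ (1 + t) - x)) ρ)
      (nhdsWithin 0 (Set.Ioi 0)) (nhds (cfc (fun x : ℝ => x * Real.log x) ρ)) := by
    apply tendsto_cfc_fun
    · have hcomp : IsCompact (spectrum ℝ ρ) := spectrum.isCompact ρ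
      have hcont : Continuous fun x : ℝ => 4 * (√x * Real.log √x) ^ 2 * max 1 x := by
        have := Real.continuous_mul_log.comp Real.continuous_sqrt
        simp only [Function.comp_def] at this
        fun_prop
      obtain ⟨M, hM⟩ := hcomp.bddAbove_image hcont.continuousOn
      rw [Metric.tendstoUniformlyOn_iff]
      intro ε hε
      have h1 : Tendsto (fun t : ℝ => t * M) (nhdsWithin 0 (Set.Ioi 0)) (nhds 0) := by
        have : Tendsto (fun t : ℝ => t * M) (nhds 0) (nhds (0 * M)) :=
          (continuous_id.mul continuous_const).tendsto 0
        rw [zero_mul] at this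
        exact this.mono_left nhdsWithin_le_nhds
      filter_upwards [h1.eventually_lt_const hε, self_mem_nhdsWithin,
        nhdsWithin_le_nhds (Iic_mem_nhds (zero_lt_one' ℝ))] with t h2 h3 h4 x hx
      rw [dist_comm, Real.dist_eq]
      refine (aux_deriv_bound x t (aux_spec ρ hρ x hx) h3 h4).trans_lt (lt_of_le_of_lt ?_ h2)
      have : 0 ≤ t := le_of_lt h3
      gcongr
      exact hM ⟨x, hx, rfl⟩
    · filter_upwards [self_mem_nhdsWithin] with t ht
      have := hc t ht
      fun_prop
  refine key.congr' ?_
  filter_upwards [self_mem_nhdsWithin] with t ht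
  have := hc t ht
  rw [cfc_const_mul _ _ ρ, cfc_sub _ _ ρ, cfc_id' ℝ ρ, opow]

lemma negLogTrunc_cont (n : ℕ) (ρ : H →L[ℂ] H) (hρ : 0 ≤ ρ) :
    ContinuousOn (negLogTrunc n) (spectrum ℝ ρ) := by
  unfold negLogTrunc
  refine ContinuousOn.neg (ContinuousOn.log (by fun_prop) ?_)
  intro x hx
  have := aux_spec ρ hρ x hx
  positivity

lemma negLogTrunc_tendsto (ρ : H →L[ℂ] H) (hρ : 0 ≤ ρ) :
    Tendsto (fun n : ℕ => cfc (negLogTrunc n) ρ * ρ) atTop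
      (nhds (-cfc (fun x : ℝ => x * Real.log x) ρ)) := by
  have hsa : IsSelfAdjoint ρ := IsSelfAdjoint.of_nonneg hρ
  rw [← cfc_neg]
  have key : Tendsto (fun n : ℕ => cfc (fun x : ℝ => negLogTrunc n x * x) ρ) atTop
      (nhds (cfc (fun x : ℝ => -(x * Real.log x)) ρ)) := by
    apply tendsto_cfc_fun
    · rw [Metric.tendstoUniformlyOn_iff]
      intro ε hε
      have h1 : Tendsto (fun n : ℕ => Real.exp (-(n:ℝ))) atTop (nhds 0) :=
        Real.tendsto_exp_neg_atTop_nhds_zero.comp tendsto_natCast_atTop_atTop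
      filter_upwards [h1.eventually_lt_const hε] with n hn x hx
      have := aux_log_bound x (Real.exp (-(n:ℝ))) (aux_spec ρ hρ x hx) (Real.exp_pos _)
      rw [dist_comm, Real.dist_eq, negLogTrunc]
      refine lt_of_le_of_lt (le_of_eq_of_le ?_ this) hn
      congr 1; ring
    · exact .of_forall fun n => (negLogTrunc_cont n ρ hρ).mul continuousOn_id
  refine key.congr fun n => ?_
  rw [cfc_mul _ _ ρ (negLogTrunc_cont n ρ hρ), cfc_id' ℝ ρ]

lemma opow_mul_left (ρ : H →L[ℂ] H) (hρ : 0 ≤ ρ) (s : ℝ) (hs : 0 ≤ s) :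
    ρ * opow ρ s = opow ρ (1 + s) := by
  have hsa : IsSelfAdjoint ρ := IsSelfAdjoint.of_nonneg hρ
  have : Continuous fun x : ℝ => x ^ s := Real.continuous_rpow_const hs
  unfold opow
  conv_lhs => enter [1]; rw [← cfc_id' ℝ ρ]
  rw [← cfc_mul _ _ ρ]
  refine cfc_congr fun x hx => ?_
  rw [Real.rpow_add_of_nonneg (aux_spec ρ hρ x hx) zero_le_one hs, Real.rpow_one]

lemma opow_mul_right (ρ : H →L[ℂ] H) (hρ : 0 ≤ ρ) (s : ℝ) (hs : 0 ≤ s) :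
    opow ρ s * ρ = opow ρ (1 + s) := by
  have hsa : IsSelfAdjoint ρ := IsSelfAdjoint.of_nonneg hρ
  have : Continuous fun x : ℝ => x ^ s := Real.continuous_rpow_const hs
  unfold opow
  conv_lhs => enter [2]; rw [← cfc_id' ℝ ρ]
  rw [← cfc_mul _ _ ρ]
  refine cfc_congr fun x hx => ?_
  rw [Real.rpow_add_of_nonneg (aux_spec ρ hρ x hx) zero_le_one hs, Real.rpow_one, mul_comm]

lemma opow_one (ρ : H →L[ℂ] H) (hρ : 0 ≤ ρ) : opow ρ 1 = ρ := by
  have hsa : IsSelfAdjoint ρ := IsSelfAdjoint.of_nonneg hρ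
  unfold opow
  simp only [Real.rpow_one]
  exact cfc_id' ℝ ρ

lemma opow_continuousAt (ρ : H →L[ℂ] H) (s : ℝ) (hs : 0 < s) :
    ContinuousAt (fun t => opow ρ t) s := by
  unfold opow
  apply continuousAt_cfc_fun
  · have hcomp : IsCompact (spectrum ℝ ρ) := spectrum.isCompact ρ
    have hc : ContinuousOn (fun p : ℝ × ℝ => p.2 ^ p.1)
        (Set.Icc (s/2) (s+1) ×ˢ spectrum ℝ ρ) := by
      intro p hp
      have : 0 < p.1 := lt_of_lt_of_le (by linarith) hp.1.1
      have h := Real.continuousAt_rpow (p.2, p.1) (Or.inr this)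
      exact (ContinuousAt.comp (f := fun p : ℝ × ℝ => (p.2, p.1)) (x := p) h
        (by fun_prop)).continuousWithinAt
    have hu := (isCompact_Icc.prod hcomp).uniformContinuousOn_of_continuous hc
    have := UniformContinuousOn.tendstoUniformlyOn (F := fun (t x : ℝ) => x ^ t) (x := s) hu
      ⟨by linarith, by linarith⟩
    rwa [nhdsWithin_eq_nhds.2 (Icc_mem_nhds (by linarith) (by linarith))] at this
  · filter_upwards [lt_mem_nhds hs] with t ht
    exact (Real.continuous_rpow_const ht.le).continuousOn

lemma opow_bound (ρ : H →L[ℂ] H) (hρ : 0 ≤ ρ) (t : ℝ) :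
    ∃ M, 0 ≤ M ∧ ∀ s, 0 ≤ s → s ≤ t → ‖opow ρ s‖ ≤ M := by
  refine ⟨(max 1 (‖ρ‖ * ‖(1 : H →L[ℂ] H)‖)) ^ t, by positivity, fun s hs hst => ?_⟩
  unfold opow
  refine norm_cfc_le (by positivity) fun x hx => ?_
  have h0 := aux_spec ρ hρ x hx
  have h1 : x ≤ max 1 (‖ρ‖ * ‖(1 : H →L[ℂ] H)‖) := by
    have := spectrum.norm_le_norm_mul_of_mem hx
    rw [Real.norm_of_nonneg h0] at this
    exact this.trans (le_max_right _ _)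
  rw [Real.norm_of_nonneg (by positivity)]
  exact (Real.rpow_le_rpow h0 h1 hs).trans
    (Real.rpow_le_rpow_of_exponent_le (le_max_left _ _) hst)

lemma duhamel_integrable (ρ σ X : H →L[ℂ] H) (hρ : 0 ≤ ρ) (hσ : 0 ≤ σ) (t : ℝ) (ht : 0 < t) :
    IntervalIntegrable (fun s => opow ρ (t - s) * X * opow σ s) volume 0 t := by
  rw [intervalIntegrable_iff_integrableOn_Ioo_of_le ht.le]
  obtain ⟨M, hM0, hM⟩ := opow_bound ρ hρ t
  obtain ⟨N, hN0, hN⟩ := opow_bound σ hσ t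
  refine IntegrableOn.of_bound (by simp) ?_ (M * ‖X‖ * N) ?_
  · refine ContinuousOn.aestronglyMeasurable ?_ measurableSet_Ioo
    intro s hs
    have h1 : ContinuousAt (fun s => opow ρ (t - s)) s :=
      ContinuousAt.comp (f := fun s => t - s) (opow_continuousAt ρ (t - s) (by linarith [hs.2]))
        (by fun_prop)
    have h2 := opow_continuousAt σ s hs.1
    exact ((h1.mul continuousAt_const).mul h2).continuousWithinAt
  · filter_upwards [ae_restrict_mem measurableSet_Ioo] with s hs
    have h1 := hM (t - s) (by linarith [hs.2]) (by linarith [hs.1])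
    have h2 := hN s hs.1.le hs.2.le
    calc _ ≤ ‖opow ρ (t - s)‖ * ‖X‖ * ‖opow σ s‖ :=
          (norm_mul_le _ _).trans (by gcongr; exact norm_mul_le _ _)
      _ ≤ _ := by gcongr

/-- The Duhamel equation multiplied by `ρ` on the left and `σ` on the right. -/
lemma duhamel_mul (ρ σ X : H →L[ℂ] H) (hρ : 0 ≤ ρ) (hσ : 0 ≤ σ) (hσX : IsExpPerturbed ρ σ X)
    (t : ℝ) (ht : 0 < t) :
    IntervalIntegrable (fun s => opow ρ (1 + (t - s)) * X * opow σ (1 + s)) volume 0 t ∧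
    (opow ρ (1 + t) - ρ) * σ - ρ * (opow σ (1 + t) - σ) =
      ∫ s in (0:ℝ)..t, opow ρ (1 + (t - s)) * X * opow σ (1 + s) := by
  have hint := duhamel_integrable ρ σ X hρ hσ t ht
  let L : (H →L[ℂ] H) →L[ℝ] (H →L[ℂ] H) :=
    (ContinuousLinearMap.mul ℝ (H →L[ℂ] H) ρ).comp ((ContinuousLinearMap.mul ℝ (H →L[ℂ] H)).flip σ)
  have hL : ∀ T, L T = ρ * (T * σ) := fun T => rfl
  have hcongr : ∀ s ∈ Set.uIcc 0 t, L (opow ρ (t - s) * X * opow σ s)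
      = opow ρ (1 + (t - s)) * X * opow σ (1 + s) := by
    intro s hs
    rw [Set.uIcc_of_le ht.le] at hs
    rw [hL, ← opow_mul_left ρ hρ _ (by linarith [hs.2]), ← opow_mul_right σ hσ _ hs.1]
    simp only [mul_assoc]
  constructor
  · have : IntervalIntegrable (fun s => L (opow ρ (t - s) * X * opow σ s)) volume 0 t := by
      rw [intervalIntegrable_iff] at hint ⊢
      exact L.integrable_comp hint
    refine this.congr fun s hs => hcongr s (Set.uIoc_subset_uIcc hs)
  · rw [← intervalIntegral.integral_congr hcongr, L.intervalIntegral_comp_comm hint]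
    have h := hσX t ht.le
    have : ∫ s in (0:ℝ)..t, opow ρ (t - s) * X * opow σ s = opow ρ t - opow σ t := by
      rw [h]; abel
    rw [this, hL, ← opow_mul_left ρ hρ t ht.le, ← opow_mul_right σ hσ t ht.le]
    noncomm_ring

lemma core_identity (ρ σ X : H →L[ℂ] H) (hρ : 0 ≤ ρ) (hσ : 0 ≤ σ) (hσX : IsExpPerturbed ρ σ X) :
    cfc (fun x : ℝ => x * Real.log x) ρ * σ - ρ * cfc (fun x : ℝ => x * Real.log x) σ
      = ρ * X * σ := by
  have h1 : Tendsto (fun t : ℝ => t⁻¹ • ((opow ρ (1 + t) - ρ) * σ - ρ * (opow σ (1 + t) - σ)))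
      (nhdsWithin 0 (Set.Ioi 0))
      (nhds (cfc (fun x : ℝ => x * Real.log x) ρ * σ
        - ρ * cfc (fun x : ℝ => x * Real.log x) σ)) := by
    refine (((opow_deriv ρ hρ).mul_const σ).sub ((opow_deriv σ hσ).const_mul ρ)).congr fun t => ?_
    rw [smul_mul_assoc, mul_smul_comm, ← smul_sub]
  refine tendsto_nhds_unique h1 ?_
  -- joint continuity of the integrand
  have hc : ContinuousAt (fun p : ℝ × ℝ => opow ρ (1 + p.1) * X * opow σ (1 + p.2)) (0, 0) := by
    have a1 : ContinuousAt (fun p : ℝ × ℝ => opow ρ (1 + p.1)) (0, 0) :=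
      ContinuousAt.comp (g := fun t => opow ρ t) (f := fun p : ℝ × ℝ => 1 + p.1)
        (opow_continuousAt ρ _ (by norm_num)) (by fun_prop)
    have a2 : ContinuousAt (fun p : ℝ × ℝ => opow σ (1 + p.2)) (0, 0) :=
      ContinuousAt.comp (g := fun t => opow σ t) (f := fun p : ℝ × ℝ => 1 + p.2)
        (opow_continuousAt σ _ (by norm_num)) (by fun_prop)
    exact (a1.mul continuousAt_const).mul a2
  rw [Metric.tendsto_nhds]
  intro ε hε
  obtain ⟨δ, hδ, hd⟩ := Metric.continuousAt_iff.1 hc (ε / 2) (by positivity)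
  filter_upwards [self_mem_nhdsWithin, nhdsWithin_le_nhds (Iio_mem_nhds hδ)] with t ht htδ
  have ht : 0 < t := ht
  have htδ : t < δ := htδ
  obtain ⟨hi, he⟩ := duhamel_mul ρ σ X hρ hσ hσX t ht
  have hb : ‖∫ s in (0:ℝ)..t, (opow ρ (1 + (t - s)) * X * opow σ (1 + s) - ρ * X * σ)‖
      ≤ ε / 2 * |t - 0| := by
    refine intervalIntegral.norm_integral_le_of_norm_le_const fun s hs => ?_
    rw [Set.uIoc_of_le ht.le] at hs
    have := hd (x := (t - s, s)) (by
      rw [Prod.dist_eq, max_lt_iff]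
      simp only [Real.dist_eq, sub_zero]
      rw [abs_of_nonneg (by linarith [hs.2]), abs_of_nonneg hs.1.le]
      constructor <;> linarith [hs.1, hs.2])
    simp only [add_zero, opow_one ρ hρ, opow_one σ hσ] at this
    rw [dist_eq_norm] at this
    exact this.le
  rw [intervalIntegral.integral_sub hi (by simp), intervalIntegral.integral_const, ← he,
    sub_zero, abs_of_pos ht] at hb
  rw [dist_eq_norm]
  set Q := (opow ρ (1 + t) - ρ) * σ - ρ * (opow σ (1 + t) - σ)
  have : t⁻¹ • Q - ρ * X * σ = t⁻¹ • (Q - t • (ρ * X * σ)) := by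
    rw [smul_sub t⁻¹ Q, inv_smul_smul₀ ht.ne']
  rw [this, norm_smul, norm_inv, Real.norm_of_nonneg ht.le]
  calc t⁻¹ * ‖Q - t • (ρ * X * σ)‖ ≤ t⁻¹ * (ε / 2 * t) := by gcongr
    _ = ε / 2 := by field_simp
    _ < ε := by linarith

lemma negLogTrunc_eq_log (n : ℕ) (ρ : H →L[ℂ] H) (hρ : 0 ≤ ρ) :
    cfc (negLogTrunc n) ρ = -CFC.log (ρ + algebraMap ℝ _ (Real.exp (-(n:ℝ)))) := by
  have hsa : IsSelfAdjoint ρ := IsSelfAdjoint.of_nonneg hρ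
  have e1 : ρ + algebraMap ℝ _ (Real.exp (-(n:ℝ))) = cfc (fun x : ℝ => x + Real.exp (-(n:ℝ))) ρ := by
    rw [cfc_add_const _ _ ρ, cfc_id' ℝ ρ]
  have hc : ContinuousOn Real.log ((fun x : ℝ => x + Real.exp (-(n:ℝ))) '' spectrum ℝ ρ) := by
    refine ContinuousOn.log continuousOn_id ?_
    rintro _ ⟨x, hx, rfl⟩
    have := aux_spec ρ hρ x hx
    simp only
    positivity
  rw [e1, CFC.log, ← cfc_comp' Real.log (fun x : ℝ => x + Real.exp (-(n:ℝ))) ρ hc, ← cfc_neg]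
  rfl

lemma strictlyPos (n : ℕ) (ρ : H →L[ℂ] H) (hρ : 0 ≤ ρ) :
    IsStrictlyPositive (ρ + algebraMap ℝ (H →L[ℂ] H) (Real.exp (-(n:ℝ)))) := by
  have h : IsStrictlyPositive (algebraMap ℝ (H →L[ℂ] H) (Real.exp (-(n:ℝ)))) :=
    by
    rw [Algebra.algebraMap_eq_smul_one]
    exact isStrictlyPositive_one.smul (Real.exp_pos _)
  exact h.of_le (le_add_of_nonneg_left hρ)

lemma log_diff_le (n : ℕ) (ρ σ : H →L[ℂ] H) (hρ : 0 ≤ ρ) (hσ : 0 ≤ σ) (C : ℝ) (hC : 1 < C)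
    (h : σ ≤ C • ρ) :
    cfc (negLogTrunc n) ρ - cfc (negLogTrunc n) σ ≤ algebraMap ℝ _ (Real.log C) := by
  set e := Real.exp (-(n:ℝ)) with he
  have he0 : 0 < e := Real.exp_pos _
  have h1 : σ + algebraMap ℝ _ e ≤ C • (ρ + algebraMap ℝ _ e) := by
    rw [smul_add]
    refine add_le_add h ?_
    rw [Algebra.smul_def, ← map_mul]
    exact algebraMap_mono _ (by nlinarith)
  have h2 := CFC.log_le_log h1 (strictlyPos n σ hσ)
  rw [CFC.log_smul' _ (by linarith) (strictlyPos n ρ hρ)] at h2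
  rw [negLogTrunc_eq_log n ρ hρ, negLogTrunc_eq_log n σ hσ]
  rw [neg_sub_neg, sub_le_iff_le_add]
  exact h2

lemma log_diff_norm (n : ℕ) (ρ σ : H →L[ℂ] H) (hρ : 0 ≤ ρ) (hσ : 0 ≤ σ) (C : ℝ) (hC : 1 < C)
    (h1 : C⁻¹ • ρ ≤ σ) (h2 : σ ≤ C • ρ) :
    ‖cfc (negLogTrunc n) σ - cfc (negLogTrunc n) ρ‖ ≤ Real.log C := by
  have hC0 : 0 < C := by linarith
  have a1 := log_diff_le n ρ σ hρ hσ C hC h2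
  have a2 := log_diff_le n σ ρ hσ hρ C hC (by
    have := smul_le_smul_of_nonneg_left h1 hC0.le
    rwa [smul_inv_smul₀ hC0.ne'] at this)
  set D := cfc (negLogTrunc n) σ - cfc (negLogTrunc n) ρ with hD
  have hsa : IsSelfAdjoint D := IsSelfAdjoint.sub (cfc_predicate _ σ) (cfc_predicate _ ρ)
  have a1' : algebraMap ℝ _ (-Real.log C) ≤ D := by
    rw [map_neg, hD, neg_le, neg_sub]; exact a1
  have hl : 0 ≤ Real.log C := Real.log_nonneg hC.le
  rw [← cfc_id' ℝ D]
  refine norm_cfc_le hl fun x hx => ?_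
  rw [Real.norm_eq_abs, abs_le]
  exact ⟨(algebraMap_le_iff_le_spectrum (a := D)).1 a1' x hx,
    (le_algebraMap_iff_spectrum_le (a := D)).1 a2 x hx⟩

lemma dense_range_of_inj (ρ : H →L[ℂ] H) (hρ : 0 ≤ ρ) (hi : Function.Injective ρ) :
    DenseRange ρ := by
  have hsa : IsSelfAdjoint ρ := IsSelfAdjoint.of_nonneg hρ
  have h := ρ.orthogonal_ker
  rw [← ContinuousLinearMap.star_eq_adjoint, hsa.star_eq, LinearMap.ker_eq_bot.2 hi,
    Submodule.bot_orthogonal_eq_top] at h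
  have := Submodule.dense_iff_topologicalClosure_eq_top.2 h.symm
  exact this

/-- Bounded bilinear density argument. -/
lemma weak_of_dense (D : ℕ → H →L[ℂ] H) (Y P Q : H →L[ℂ] H) (M : ℝ) (hM : ∀ n, ‖D n‖ ≤ M)
    (hP : IsSelfAdjoint P)
    (dP : DenseRange P) (dQ : DenseRange Q)
    (h : Tendsto (fun n => P * D n * Q) atTop (nhds (P * Y * Q))) (η ξ : H) :
    Tendsto (fun n => ⟪η, D n ξ⟫_ℂ) atTop (nhds ⟪η, Y ξ⟫_ℂ) := by
  have hM0 : 0 ≤ M := (norm_nonneg _).trans (hM 0)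
  set N := M + ‖Y‖ + 1 with hN
  have hN0 : 0 < N := by positivity
  have hE : ∀ n, ‖D n - Y‖ ≤ N := fun n => (norm_sub_le _ _).trans (by linarith [hM n])
  rw [Metric.tendsto_nhds]
  intro ε hε
  -- approximate ξ
  obtain ⟨x, hx⟩ := Metric.denseRange_iff.1 dQ ξ (ε / (3 * N * (‖η‖ + 1))) (by positivity)
  obtain ⟨y, hy⟩ := Metric.denseRange_iff.1 dP η (ε / (3 * N * (‖Q x‖ + 1))) (by positivity)
  have hlim : Tendsto (fun n => ⟪y, (P * D n * Q) x⟫_ℂ) atTop (nhds ⟪y, (P * Y * Q) x⟫_ℂ) := by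
    have h1 : Tendsto (fun n => (P * D n * Q) x) atTop (nhds ((P * Y * Q) x)) :=
      ((ContinuousLinearMap.apply ℂ H x).continuous.tendsto _).comp h
    exact tendsto_const_nhds.inner h1
  have hPadj : ∀ z, ⟪y, P z⟫_ℂ = ⟪P y, z⟫_ℂ := fun z =>
    ((ContinuousLinearMap.isSelfAdjoint_iff_isSymmetric.1 hP) y z).symm
  filter_upwards [Metric.tendsto_nhds.1 hlim (ε / 3) (by positivity)] with n hn
  have hn' : ‖⟪P y, (D n - Y) (Q x)⟫_ℂ‖ < ε / 3 := by
    rw [dist_eq_norm] at hn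
    simp only [mul_apply_eq_comp, hPadj] at hn
    simpa [inner_sub_right] using hn
  rw [dist_eq_norm] at hx hy ⊢
  have e : ⟪η, D n ξ⟫_ℂ - ⟪η, Y ξ⟫_ℂ = ⟪η, (D n - Y) (ξ - Q x)⟫_ℂ
      + ⟪η - P y, (D n - Y) (Q x)⟫_ℂ + ⟪P y, (D n - Y) (Q x)⟫_ℂ := by
    simp only [map_sub, inner_sub_left, inner_sub_right, sub_apply]
    ring
  have b1 : ‖⟪η, (D n - Y) (ξ - Q x)⟫_ℂ‖ ≤ ε / 3 := by
    calc _ ≤ ‖η‖ * (N * ‖ξ - Q x‖) := (norm_inner_le_norm _ _).trans (by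
          gcongr; exact (D n - Y).le_of_opNorm_le (hE n) _)
      _ ≤ (‖η‖ + 1) * (N * (ε / (3 * N * (‖η‖ + 1)))) := by gcongr; linarith
      _ = ε / 3 := by field_simp
  have b2 : ‖⟪η - P y, (D n - Y) (Q x)⟫_ℂ‖ ≤ ε / 3 := by
    calc _ ≤ ‖η - P y‖ * (N * ‖Q x‖) := (norm_inner_le_norm _ _).trans (by
          gcongr; exact (D n - Y).le_of_opNorm_le (hE n) _)
      _ ≤ (ε / (3 * N * (‖Q x‖ + 1))) * (N * (‖Q x‖ + 1)) := by gcongr; linarith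
      _ = ε / 3 := by field_simp
  rw [e]
  refine (norm_add₃_le).trans_lt ?_
  linarith

/-- `ρ (D_n) σ → ρ X σ` in norm. -/
lemma sandwich_tendsto (ρ σ X : H →L[ℂ] H) (hρ : 0 ≤ ρ) (hσ : 0 ≤ σ)
    (hid : cfc (fun x : ℝ => x * Real.log x) ρ * σ - ρ * cfc (fun x : ℝ => x * Real.log x) σ
      = ρ * X * σ) :
    Tendsto (fun n : ℕ => ρ * (cfc (negLogTrunc n) σ - cfc (negLogTrunc n) ρ) * σ) atTop
      (nhds (ρ * X * σ)) := by
  have hsa : IsSelfAdjoint ρ := IsSelfAdjoint.of_nonneg hρ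
  have h1 := (negLogTrunc_tendsto σ hσ).const_mul ρ
  have h2 := (negLogTrunc_tendsto ρ hρ).mul_const σ
  have h3 := h1.sub h2
  rw [← hid]
  convert h3.congr (f₂ := fun n : ℕ => ρ * (cfc (negLogTrunc n) σ - cfc (negLogTrunc n) ρ) * σ)
    fun n => ?_ using 2
  · noncomm_ring
  · have : cfc (negLogTrunc n) ρ * ρ = ρ * cfc (negLogTrunc n) ρ :=
      (cfc_commute_cfc (negLogTrunc n) (fun x : ℝ => x) ρ |>.eq).trans (by rw [cfc_id' ℝ ρ]) |> fun h => by
        rw [cfc_id' ℝ ρ] at h; exact h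
    rw [this]
    noncomm_ring

lemma parseval {ι : Type*} (b : HilbertBasis ι ℂ H) (v : H) :
    HasSum (fun j => ‖⟪b j, v⟫_ℂ‖ ^ 2) (‖v‖ ^ 2) := by
  have h := (b.hasSum_inner_mul_inner v v).mapL Complex.reCLM
  convert h using 1
  · ext j
    simp only [Complex.reCLM_apply]
    rw [← inner_conj_symm v (b j), ← Complex.normSq_eq_conj_mul_self, Complex.ofReal_re,
      Complex.normSq_eq_norm_sq]
  · simp only [Complex.reCLM_apply]
    rw [inner_self_eq_norm_sq_to_K]; norm_cast

/-- Hilbert-Schmidt double summability. -/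
lemma hs_summable {ι : Type*} (b : HilbertBasis ι ℂ H) (A : H →L[ℂ] H)
    (hA : Summable fun i => ‖A (b i)‖ ^ 2) :
    Summable fun p : ι × ι => ‖⟪b p.2, A (b p.1)⟫_ℂ‖ ^ 2 := by
  rw [summable_prod_of_nonneg (fun p => by positivity)]
  refine ⟨fun i => (parseval b (A (b i))).summable, ?_⟩
  simpa only [(parseval b (A (b _))).tsum_eq] using hA

lemma hs_cyclic {ι : Type*} (b : HilbertBasis ι ℂ H) (W R W₂ R₂ : H →L[ℂ] H)
    (hW : ∀ x y, ⟪W x, y⟫_ℂ = ⟪x, W₂ y⟫_ℂ) (hR : ∀ x y, ⟪x, R y⟫_ℂ = ⟪R₂ x, y⟫_ℂ)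
    (hs : Summable fun i => ‖R (b i)‖ ^ 2) (hs2 : Summable fun i => ‖W (b i)‖ ^ 2) :
    HasSum (fun i => ⟪R₂ (b i), W₂ (b i)⟫_ℂ) (∑' j, ⟪W (b j), R (b j)⟫_ℂ) := by
  have s1 := hs_summable b R hs
  have s2 := hs_summable b W hs2
  have hf : Summable fun p : ι × ι => ⟪W (b p.1), b p.2⟫_ℂ * ⟪b p.2, R (b p.1)⟫_ℂ := by
    refine Summable.of_norm_bounded (s1.add s2) fun p => ?_
    rw [norm_mul, norm_inner_symm (W (b p.1))]
    have h := two_mul_le_add_sq ‖⟪b p.2, R (b p.1)⟫_ℂ‖ ‖⟪b p.2, W (b p.1)⟫_ℂ‖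
    have h' : 0 ≤ ‖⟪b p.2, R (b p.1)⟫_ℂ‖ * ‖⟪b p.2, W (b p.1)⟫_ℂ‖ := by positivity
    linarith
  have r1 : ∀ j, HasSum (fun i => ⟪W (b j), b i⟫_ℂ * ⟪b i, R (b j)⟫_ℂ) ⟪W (b j), R (b j)⟫_ℂ :=
    fun j => b.hasSum_inner_mul_inner _ _
  have r2 : ∀ i, HasSum (fun j => ⟪W (b j), b i⟫_ℂ * ⟪b i, R (b j)⟫_ℂ)
      ⟪R₂ (b i), W₂ (b i)⟫_ℂ := by
    intro i
    have h := b.hasSum_inner_mul_inner (R₂ (b i)) (W₂ (b i))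
    have e : (fun j => ⟪W (b j), b i⟫_ℂ * ⟪b i, R (b j)⟫_ℂ)
        = fun j => ⟪R₂ (b i), b j⟫_ℂ * ⟪b j, W₂ (b i)⟫_ℂ := by
      funext j
      rw [hW, hR, mul_comm]
    rw [e]
    exact h
  have g1 := hf.hasSum.prod_fiberwise r1
  have g2 := ((Equiv.prodComm ι ι).hasSum_iff.2 hf.hasSum).prod_fiberwise r2
  rw [g1.tsum_eq]
  exact g2

/-- Square root: `Tr (ρ T) = Tr (ρ^{1/2} T ρ^{1/2})`. -/
lemma trace_cyclic {ι : Type*} (b : HilbertBasis ι ℂ H) (R T : H →L[ℂ] H)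
    (hR : IsSelfAdjoint R) (hs : Summable fun i => ‖R (b i)‖ ^ 2) :
    HasSum (fun i => ⟪b i, (R * R * T) (b i)⟫_ℂ) (∑' j, ⟪R (b j), T (R (b j))⟫_ℂ) := by
  have hsym : ∀ x y, ⟪R x, y⟫_ℂ = ⟪x, R y⟫_ℂ :=
    fun x y => (ContinuousLinearMap.isSelfAdjoint_iff_isSymmetric.1 hR) x y
  obtain ⟨S, hST⟩ : ∃ S : H →L[ℂ] H, ∀ x y, ⟪S x, y⟫_ℂ = ⟪x, T y⟫_ℂ :=
    ⟨ContinuousLinearMap.adjoint T, fun x y => ContinuousLinearMap.adjoint_inner_left T y x⟩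
  -- the other Hilbert-Schmidt operator is `T† R`
  have hs2 : Summable fun i => ‖(S.comp R) (b i)‖ ^ 2 := by
    refine Summable.of_nonneg_of_le (fun i => by positivity) (fun i => ?_) (hs.mul_left (‖S‖ ^ 2))
    rw [← mul_pow]
    gcongr
    exact S.le_opNorm _
  have h := hs_cyclic b (S.comp R) R (R.comp T) R
    (fun x y => by simp only [ContinuousLinearMap.comp_apply]; rw [hST, hsym])
    (fun x y => (hsym x y).symm) hs hs2
  simp only [ContinuousLinearMap.comp_apply, hST] at h
  simp only [hsym (b _) (R (T _))] at h
  exact h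

lemma sqrt_summable {ι : Type*} (b : HilbertBasis ι ℂ H) (ρ : H →L[ℂ] H)
    (hρ : IsFiniteWeight b ρ) :
    ∃ R : H →L[ℂ] H, IsSelfAdjoint R ∧ R * R = ρ ∧ Summable fun i => ‖R (b i)‖ ^ 2 := by
  have hR : IsSelfAdjoint (CFC.sqrt ρ) := IsSelfAdjoint.of_nonneg (CFC.sqrt_nonneg ρ)
  have hm : CFC.sqrt ρ * CFC.sqrt ρ = ρ := CFC.sqrt_mul_sqrt_self ρ hρ.1
  refine ⟨CFC.sqrt ρ, hR, hm, hρ.2.2.congr fun i => ?_⟩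
  conv_lhs => rw [← hm]
  have h := (ContinuousLinearMap.isSelfAdjoint_iff_isSymmetric.1 hR) (b i) (CFC.sqrt ρ (b i))
  have h' : ⟪b i, (CFC.sqrt ρ * CFC.sqrt ρ) (b i)⟫_ℂ
      = ⟪CFC.sqrt ρ (b i), CFC.sqrt ρ (b i)⟫_ℂ := h.symm
  rw [h', inner_self_eq_norm_sq_to_K]
  norm_cast

lemma trace_summable {ι : Type*} (b : HilbertBasis ι ℂ H) (ρ T : H →L[ℂ] H)
    (hρ : IsFiniteWeight b ρ) : Summable fun i => (⟪b i, (ρ * T) (b i)⟫_ℂ).re := by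
  obtain ⟨R, hR, rfl, hs⟩ := sqrt_summable b ρ hρ
  exact ((trace_cyclic b R T hR hs).mapL Complex.reCLM).summable

/-- The trace against a finite weight is continuous for bounded weak convergence. -/
lemma trace_tendsto {ι : Type*} (b : HilbertBasis ι ℂ H) (ρ : H →L[ℂ] H)
    (hρ : IsFiniteWeight b ρ) (D : ℕ → H →L[ℂ] H) (Y : H →L[ℂ] H) (M : ℝ)
    (hM : ∀ n, ‖D n‖ ≤ M)
    (hw : ∀ ξ, Tendsto (fun n => ⟪ξ, D n ξ⟫_ℂ) atTop (nhds ⟪ξ, Y ξ⟫_ℂ)) :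
    Tendsto (fun n => trElem b (ρ * D n)) atTop (nhds (trElem b (ρ * Y))) := by
  obtain ⟨R, hR, rfl, hs⟩ := sqrt_summable b ρ hρ
  have e : ∀ T, trElem b (R * R * T) = (∑' j, ⟪R (b j), T (R (b j))⟫_ℂ).re := fun T =>
    ((trace_cyclic b R T hR hs).mapL Complex.reCLM).tsum_eq
  simp only [e]
  refine (Complex.continuous_re.tendsto _).comp ?_
  refine tendsto_tsum_of_dominated_convergence (hs.mul_left M) (fun j => hw _) ?_
  refine .of_forall fun n j => ?_
  calc _ ≤ ‖R (b j)‖ * (M * ‖R (b j)‖) := (norm_inner_le_norm _ _).trans (by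
        gcongr; exact (D n).le_of_opNorm_le (hM n) _)
    _ = _ := by ring

/-- Let `ρ = exp (-H₀)` and `σ = ρ_X = exp (-(H₀+X))` be finite
faithful weights with `X` bounded (self-adjoint) and `σ` nearby `ρ`.  Then both relative
entropies `S(ρ|σ) = Tr (ρ (log ρ - log σ))` and `S(σ|ρ) = Tr (σ (log σ - log ρ))` are
finite (the regularised traces converge), and their sum satisfies
`S(ρ|σ) + S(σ|ρ) = Tr ((ρ - σ) X)`. -/
theorem statement11 {ι : Type*} (b : HilbertBasis ι ℂ H) (ρ σ X : H →L[ℂ] H)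
    (hρ : IsFiniteWeight b ρ) (hσ : IsFiniteWeight b σ) (hX : IsSelfAdjoint X)
    (hσX : IsExpPerturbed ρ σ X) (hnear : IsNearby σ ρ) :
    ∃ S₁ S₂ : ℝ, IsRelativeEntropy b ρ σ S₁ ∧ IsRelativeEntropy b σ ρ S₂ ∧
      S₁ + S₂ = trElem b ((ρ - σ) * X) := by
  obtain ⟨C, hC, hn1, hn2⟩ := hnear
  have hid := core_identity ρ σ X hρ.1 hσ.1 hσX
  have hsw := sandwich_tendsto ρ σ X hρ.1 hσ.1 hid
  have hb : ∀ n, ‖cfc (negLogTrunc n) σ - cfc (negLogTrunc n) ρ‖ ≤ Real.log C := fun n =>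
    log_diff_norm n ρ σ hρ.1 hσ.1 C hC hn1 hn2
  have hw := weak_of_dense (fun n => cfc (negLogTrunc n) σ - cfc (negLogTrunc n) ρ) X ρ σ
    (Real.log C) hb (IsSelfAdjoint.of_nonneg hρ.1) (dense_range_of_inj ρ hρ.1 hρ.2.1)
    (dense_range_of_inj σ hσ.1 hσ.2.1) hsw
  refine ⟨trElem b (ρ * X), trElem b (σ * (-X)), ?_, ?_, ?_⟩
  · exact trace_tendsto b ρ hρ _ X (Real.log C) hb fun ξ => hw ξ ξ
  · refine trace_tendsto b σ hσ _ (-X) (Real.log C) (fun n => ?_) fun ξ => ?_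
    · rw [norm_sub_rev]; exact hb n
    · have h := (hw ξ ξ).neg
      simp only [← inner_neg_right] at h
      refine h.congr fun n => ?_
      simp [inner_sub_right]
  · unfold trElem
    rw [← (trace_summable b ρ X hρ).tsum_add (trace_summable b σ (-X) hσ)]
    refine tsum_congr fun i => ?_
    rw [← Complex.add_re, ← inner_add_right]
    congr 2
    rw [← add_apply]
    congr 1
    noncomm_ring
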